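/- arXiv:2408.00291 — 5 statements merged into one kernel-verified Lean document; each statement's English description precedes it below -/
import Mathlib

section
/- Suppose the SAR model under no treatment holds (y0c = ρ·(y00·w + W·y0c) + c), the SAR model under treatment holds (y1c = ρ·(y01·w + W·y1c) + c, with the same vector c), perfect fit holds (y00 = αᵀ y0c), and M := I_N − ρ·(w αᵀ) − ρ·W is invertible. Then the treatment effect ξ0 := y01 − y00 satisfies ξ0 = y01 − αᵀ · M⁻¹ · ((I_N − ρ·W)·y1c − ρ·y01·w). (Theorem 1, identification of the treatment effect.) -/
/-! Both equations of the model determine the same vector `c`: the treated one gives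
`(I - ρW) y1c - ρ y01 w = c`, and the untreated one, with `y00 = αᵀ y0c` substituted, gives
`M y0c = c`. Hence `M⁻¹` applied to the observed left-hand side recovers `y0c`, and perfect fit
gives `αᵀ y0c = y00`. -/

/-- Theorem 1 (Identification of the Treatment Effect): under the SAR model in both
treatment states (with the same covariate-plus-error vector `c`), perfect fit, and
invertibility of `M = I - ρ·(w αᵀ) - ρ·W`, the treatment effect `ξ0 = y01 - y00`
equals `y01 - αᵀ M⁻¹ ((I - ρW) y1c - ρ y01 w)`. -/
theorem treatment_effect_identification
    (N : ℕ) (hN : 0 < N)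
    (w : Fin N → ℝ) (W : Matrix (Fin N) (Fin N) ℝ) (ρ : ℝ) (α : Fin N → ℝ)
    (c y0c y1c : Fin N → ℝ) (y00 y01 : ℝ)
    (M : Matrix (Fin N) (Fin N) ℝ)
    (hM : M = 1 - ρ • Matrix.vecMulVec w α - ρ • W)
    (hMinv : IsUnit M)
    (hSAR0 : y0c = ρ • (y00 • w + W.mulVec y0c) + c)
    (hSAR1 : y1c = ρ • (y01 • w + W.mulVec y1c) + c)
    (hfit : y00 = ∑ i, α i * y0c i) :
    y01 - y00 =
      y01 - ∑ i, α i * (M⁻¹.mulVec ((1 - ρ • W).mulVec y1c - (ρ * y01) • w)) i := by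
  -- The treated equation, solved for `c`.
  have h1 : (1 - ρ • W).mulVec y1c - (ρ * y01) • w = c := by
    ext i
    have h := congrFun hSAR1 i
    simp only [Matrix.sub_mulVec, Matrix.one_mulVec, Matrix.smul_mulVec, Pi.add_apply,
      Pi.sub_apply, Pi.smul_apply, smul_eq_mul] at h ⊢
    linarith
  -- Perfect fit turns `y00 • w` into `(w αᵀ) y0c`, so the untreated equation is linear in `y0c`.
  have h0 : M.mulVec y0c = c := by
    ext i
    have h := congrFun hSAR0 i
    have hw : (Matrix.vecMulVec w α).mulVec y0c i = y00 * w i := by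
      rw [hfit, Matrix.vecMulVec_mulVec]
      simp [dotProduct, mul_comm (w i)]
    simp only [hM, Matrix.sub_mulVec, Matrix.one_mulVec, Matrix.smul_mulVec, Pi.add_apply,
      Pi.sub_apply, Pi.smul_apply, smul_eq_mul, hw] at h ⊢
    linarith
  have hdet : IsUnit M.det := (Matrix.isUnit_iff_isUnit_det M).mp hMinv
  rw [h1, ← h0, Matrix.mulVec_mulVec, Matrix.nonsing_inv_mul M hdet, Matrix.one_mulVec, ← hfit]
end

section
/- Suppose the SAR model under no treatment holds (y0c = ρ·(y00·w + W·y0c) + c), the SAR model under treatment holds (y1c = ρ·(y01·w + W·y1c) + c, with the same vector c), perfect fit holds (y00 = αᵀ y0c), and M := I_N − ρ·(w αᵀ) − ρ·W is invertible. Then the spillover effect vector ξc := y1c − y0c satisfies ξc = y1c − M⁻¹ · ((I_N − ρ·W)·y1c − ρ·y01·w). (Theorem 2, identification of the spillover effects.) -/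
/-! Perfect fit turns the untreated SAR equation into `M y0c = c`, since the treated unit's
outcome `αᵀ y0c` enters through the rank-one term `ρ w αᵀ`. The treated SAR equation recovers the
same `c` as `(I - ρW) y1c - ρ y01 w`, so inverting `M` expresses `y0c` through observed outcomes. -/

/-- Theorem 2 (Identification of the Spillover Effects): under the SAR model in both
treatment states (with the same covariate-plus-error vector `c`), perfect fit, and
invertibility of `M = I - ρ·(w αᵀ) - ρ·W`, the spillover effect vector
`ξc = y1c - y0c` equals `y1c - M⁻¹ ((I - ρW) y1c - ρ y01 w)`. -/
theorem spillover_effect_identification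
    (N : ℕ) (hN : 0 < N)
    (w : Fin N → ℝ) (W : Matrix (Fin N) (Fin N) ℝ) (ρ : ℝ) (α : Fin N → ℝ)
    (c y0c y1c : Fin N → ℝ) (y00 y01 : ℝ)
    (M : Matrix (Fin N) (Fin N) ℝ)
    (hM : M = 1 - ρ • Matrix.vecMulVec w α - ρ • W)
    (hMinv : IsUnit M)
    (hSAR0 : y0c = ρ • (y00 • w + W.mulVec y0c) + c)
    (hSAR1 : y1c = ρ • (y01 • w + W.mulVec y1c) + c)
    (hfit : y00 = ∑ i, α i * y0c i) :
    y1c - y0c =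
      y1c - M⁻¹.mulVec ((1 - ρ • W).mulVec y1c - (ρ * y01) • w) := by
  have h0 : M.mulVec y0c = c := by
    rw [hM, Matrix.sub_mulVec, Matrix.sub_mulVec, Matrix.one_mulVec, Matrix.smul_mulVec,
      Matrix.smul_mulVec, Matrix.vecMulVec_mulVec]
    ext i
    have h := congrFun hSAR0 i
    have hd : α ⬝ᵥ y0c = y00 := hfit.symm
    simp only [Pi.add_apply, Pi.sub_apply, Pi.smul_apply, smul_eq_mul, hd,
      MulOpposite.smul_eq_mul_unop, MulOpposite.unop_op] at h ⊢
    linarith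
  have h1 : (1 - ρ • W).mulVec y1c - (ρ * y01) • w = c := by
    rw [Matrix.sub_mulVec, Matrix.one_mulVec, Matrix.smul_mulVec]
    ext i
    have h := congrFun hSAR1 i
    simp only [Pi.add_apply, Pi.sub_apply, Pi.smul_apply, smul_eq_mul] at h ⊢
    linarith
  rw [h1, ← h0, Matrix.mulVec_mulVec,
    Matrix.nonsing_inv_mul M ((Matrix.isUnit_iff_isUnit_det M).mp hMinv), Matrix.one_mulVec]
end

section
/- Suppose the SAR model under no treatment holds (y0c = ρ·(y00·w + W·y0c) + c), the SAR model under treatment holds (y1c = ρ·(y01·w + W·y1c) + c, with the same vector c), perfect fit holds (y00 = αᵀ y0c), and M := I_N − ρ·(w αᵀ) − ρ·W is invertible. Then the unobserved counterfactual control outcomes are recovered from the treated-state outcomes by y0c = M⁻¹ · ((I_N − ρ·W)·y1c − ρ·y01·w). -/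
/-- Recovery of unobserved counterfactual control outcomes: under the SAR model in
both treatment states, perfect fit, and invertibility of `M = I - ρ·(w αᵀ) - ρ·W`,
`y0c = M⁻¹ ((I - ρW) y1c - ρ y01 w)`. -/
theorem counterfactual_control_outcomes_recovery
    (N : ℕ) (hN : 0 < N)
    (w : Fin N → ℝ) (W : Matrix (Fin N) (Fin N) ℝ) (ρ : ℝ) (α : Fin N → ℝ)
    (c y0c y1c : Fin N → ℝ) (y00 y01 : ℝ)
    (M : Matrix (Fin N) (Fin N) ℝ)
    (hM : M = 1 - ρ • Matrix.vecMulVec w α - ρ • W)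
    (hMinv : IsUnit M)
    (hSAR0 : y0c = ρ • (y00 • w + W.mulVec y0c) + c)
    (hSAR1 : y1c = ρ • (y01 • w + W.mulVec y1c) + c)
    (hfit : y00 = ∑ i, α i * y0c i) :
    y0c = M⁻¹.mulVec ((1 - ρ • W).mulVec y1c - (ρ * y01) • w) := by
  -- Both sides equal `c`: the left by the untreated model after `αᵀ y0c` replaces `y00`,
  -- the right by the treated model.
  have key : M.mulVec y0c = (1 - ρ • W).mulVec y1c - (ρ * y01) • w := by
    have hfit' : α ⬝ᵥ y0c = y00 := hfit.symm
    ext i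
    have h0 := congrFun hSAR0 i
    have h1 := congrFun hSAR1 i
    simp only [Pi.add_apply, Pi.smul_apply, smul_eq_mul] at h0 h1
    simp only [hM, Matrix.sub_mulVec, Matrix.smul_mulVec, Matrix.one_mulVec,
      Matrix.vecMulVec_mulVec, hfit', Pi.sub_apply, Pi.smul_apply, smul_eq_mul,
      MulOpposite.smul_eq_mul_unop, MulOpposite.unop_op]
    linarith
  rw [← key, Matrix.mulVec_mulVec,
    Matrix.nonsing_inv_mul M ((Matrix.isUnit_iff_isUnit_det M).mp hMinv), Matrix.one_mulVec]
end

section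
/- For all real a > 0 and x > 0, ∫₀^∞ [2x · (1/b)^{1/2}/Γ(1/2) · (x²)^{−3/2} · exp(−1/(b·x²))] · [(1/a²)^{1/2}/Γ(1/2) · b^{−3/2} · exp(−1/(a²·b))] db = 2 / (π·a·(1 + x²/a²)). That is, if X² | b ∼ Inverse-Gamma(1/2, 1/b) and b ∼ Inverse-Gamma(1/2, 1/a²), then X has the Half-Cauchy(0, a) density: the half-Cauchy distribution is an inverse-gamma scale mixture of inverse-gamma distributions. (Proposition in the Appendix.) -/
/-!
Since `Γ(1/2)² = π`, the two half-integer powers of `b` combine and the integrand collapses to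
`2 / (π a x²) · b⁻² exp (-c / b)` with `c = 1/x² + 1/a²`. The substitution `y = 1/b` turns
`∫₀^∞ b⁻² exp (-c / b) db` into `∫₀^∞ exp (-c y) dy = 1/c`, and
`2 / (π a x² c) = 2 / (π a (1 + x²/a²))`.
-/

open MeasureTheory

/-- The total mass of the unnormalized Inverse-Gamma(1, c) density. -/
lemma integral_rpow_neg_two_mul_exp_neg_div {c : ℝ} (hc : 0 < c) :
    ∫ b in Set.Ioi (0 : ℝ), b ^ (-2 : ℝ) * Real.exp (-c / b) = 1 / c := by
  have h1 := integral_comp_rpow_Ioi (fun y : ℝ => Real.exp (-c * y))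
    (p := -1) (by norm_num)
  rw [integral_exp_mul_Ioi (neg_lt_zero.mpr hc)] at h1
  calc _ = _ := ?_
    _ = _ := h1
    _ = _ := by simp
  refine setIntegral_congr_fun measurableSet_Ioi fun b _ => ?_
  norm_num [Real.rpow_neg_one, div_eq_mul_inv]

/-- The half-Cauchy distribution is an inverse-gamma scale mixture of inverse-gamma
distributions: if `X² | b ~ InvGamma(1/2, 1/b)` and `b ~ InvGamma(1/2, 1/a²)`, then
`X` has the Half-Cauchy(0, a) density (Proposition in the Appendix). -/
theorem half_cauchy_inverse_gamma_mixture (a x : ℝ) (ha : 0 < a) (hx : 0 < x) :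
    ∫ b in Set.Ioi (0 : ℝ),
        (2 * x * ((1 / b) ^ ((1 : ℝ) / 2) / Real.Gamma (1 / 2))
            * (x ^ 2) ^ (-(3 : ℝ) / 2) * Real.exp (-1 / (b * x ^ 2)))
          * ((1 / a ^ 2) ^ ((1 : ℝ) / 2) / Real.Gamma (1 / 2)
            * b ^ (-(3 : ℝ) / 2) * Real.exp (-1 / (a ^ 2 * b)))
      = 2 / (Real.pi * a * (1 + x ^ 2 / a ^ 2)) := by
  have hc : 0 < 1 / x ^ 2 + 1 / a ^ 2 := by positivity
  have hx3 : (x ^ 2) ^ (-(3 : ℝ) / 2) = (x ^ 3)⁻¹ := by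
    rw [← Real.rpow_natCast x 2, ← Real.rpow_mul hx.le, ← Real.rpow_natCast x 3,
      ← Real.rpow_neg hx.le]
    norm_num
  have ha1 : (1 / a ^ 2) ^ ((1 : ℝ) / 2) = a⁻¹ := by
    rw [← Real.sqrt_eq_rpow, one_div, Real.sqrt_inv, Real.sqrt_sq ha.le]
  have hpi : Real.sqrt Real.pi ^ 2 = Real.pi := Real.sq_sqrt Real.pi_pos.le
  have hpi0 : Real.sqrt Real.pi ≠ 0 := by positivity
  calc _ = ∫ b in Set.Ioi (0 : ℝ), 2 / (Real.pi * a * x ^ 2) *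
          (b ^ (-2 : ℝ) * Real.exp (-(1 / x ^ 2 + 1 / a ^ 2) / b)) := by
        refine setIntegral_congr_fun measurableSet_Ioi fun b (hb : 0 < b) => ?_
        have hb2 : (1 / b) ^ ((1 : ℝ) / 2) * b ^ (-(3 : ℝ) / 2) = b ^ (-2 : ℝ) := by
          rw [one_div, Real.inv_rpow hb.le, ← Real.rpow_neg hb.le, ← Real.rpow_add hb]
          norm_num
        have he : Real.exp (-(1 / x ^ 2 + 1 / a ^ 2) / b)
            = Real.exp (-1 / (b * x ^ 2)) * Real.exp (-1 / (a ^ 2 * b)) := by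
          rw [← Real.exp_add]
          congr 1
          field_simp
          ring
        simp only [hx3, ha1, Real.Gamma_one_half_eq]
        rw [he, ← hb2]
        -- The third `π` is the bare one on the right; the first two lie inside square roots.
        nth_rewrite 3 [← hpi]
        field_simp
    _ = 2 / (Real.pi * a * x ^ 2) * (1 / (1 / x ^ 2 + 1 / a ^ 2)) := by
        rw [integral_const_mul, integral_rpow_neg_two_mul_exp_neg_div hc]
    _ = _ := by
        field_simp
end

section
/- Suppose the SAR model under no treatment holds (y0c = ρ·(y00·w + W·y0c) + c), perfect fit holds (y00 = αᵀ y0c), and M := I_N − ρ·(w αᵀ) − ρ·W is invertible. Then the treatment effect ξ0 := y01 − y00 satisfies ξ0 = y01 − αᵀ · M⁻¹ · c; that is, the counterfactual synthetic control outcome equals αᵀ M⁻¹ (X_t β + u_t). -/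
/-- Under the SAR model with no treatment, perfect fit, and invertibility of
`M = I - ρ·(w αᵀ) - ρ·W`, the treatment effect satisfies
`ξ0 = y01 - αᵀ M⁻¹ c`: the counterfactual synthetic control outcome equals
`αᵀ M⁻¹ (X_t β + u_t)`. -/
theorem treatment_effect_via_structural_errors
    (N : ℕ) (hN : 0 < N)
    (w : Fin N → ℝ) (W : Matrix (Fin N) (Fin N) ℝ) (ρ : ℝ) (α : Fin N → ℝ)
    (c y0c : Fin N → ℝ) (y00 y01 : ℝ)
    (M : Matrix (Fin N) (Fin N) ℝ)
    (hM : M = 1 - ρ • Matrix.vecMulVec w α - ρ • W)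
    (hMinv : IsUnit M)
    (hSAR0 : y0c = ρ • (y00 • w + W.mulVec y0c) + c)
    (hfit : y00 = ∑ i, α i * y0c i) :
    y01 - y00 = y01 - ∑ i, α i * (M⁻¹.mulVec c) i := by
  -- Perfect fit turns `y00 • w` into `(w αᵀ) y0c`, so the SAR equation reads `M y0c = c`.
  have h : M.mulVec y0c = c := by
    have hv : (Matrix.vecMulVec w α).mulVec y0c = y00 • w := by
      ext i
      simp only [Matrix.mulVec, dotProduct, Matrix.vecMulVec_apply, Pi.smul_apply,
        smul_eq_mul, hfit, Finset.sum_mul]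
      exact Finset.sum_congr rfl fun j _ => by ring
    rw [hM, Matrix.sub_mulVec, Matrix.sub_mulVec, Matrix.one_mulVec, Matrix.smul_mulVec,
      Matrix.smul_mulVec, hv]
    ext i
    have := congrFun hSAR0 i
    simp only [Pi.add_apply, Pi.sub_apply, Pi.smul_apply, smul_eq_mul] at this ⊢
    linarith
  have hy : M⁻¹.mulVec c = y0c := by
    rw [← h, Matrix.mulVec_mulVec,
      Matrix.nonsing_inv_mul M ((Matrix.isUnit_iff_isUnit_det M).mp hMinv), Matrix.one_mulVec]
  rw [hy, ← hfit]
end
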